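/- Let c : {0,...,T} × S × A → ℝ be costs, Q the associated Q-values for kernel P, and suppose x̂ ∈ 𝒳(P, z₀) satisfies the Bellman condition for c. Define ν(t,s) := min_{a'} Q(t,s,a') and μ(t,s,a) := Q(t,s,a) − ν(t,s). Then: (i) μ(t,s,a) ≥ 0 for all t,s,a (dual feasibility); (ii) μ(t,s,a) · x̂(t,s,a) = 0 for all t,s,a (complementary slackness); (iii) the stationarity equations hold: c(t,s,a) + ∑_{s'} P(t+1,s',s,a) ν(t+1,s') = ν(t,s) + μ(t,s,a) for all t < T and all s,a, and c(T,s,a) = ν(T,s) + μ(T,s,a) for all s,a. -/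

import Mathlib

open Finset

/-- The feasible set 𝒳(P, z₀) of state-action distributions. -/
def Feas {S A : Type*} [Fintype S] [Fintype A] (T : ℕ)
    (P : Fin (T+1) → S → S → A → ℝ) (z0 : S → ℝ) :
    Set (Fin (T+1) → S → A → ℝ) :=
  {x | (∀ t s a, 0 ≤ x t s a) ∧
    (∀ s, ∑ a, x 0 s a = z0 s) ∧
    ∀ (t : ℕ) (ht : t < T), ∀ s,
      ∑ s', ∑ a, P ⟨t+1, by omega⟩ s s' a * x ⟨t, by omega⟩ s' a
        = ∑ a, x ⟨t+1, by omega⟩ s a}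

/-- `P` is a transition kernel: nonnegative, and column-stochastic for t ∈ {1,…,T}. -/
def IsKernel {S A : Type*} [Fintype S] (T : ℕ)
    (P : Fin (T+1) → S → S → A → ℝ) : Prop :=
  (∀ t s' s a, 0 ≤ P t s' s a) ∧
    ∀ t : Fin (T+1), t ≠ 0 → ∀ s a, ∑ s', P t s' s a = 1

/-- Backwards recursion for Q-values: `Qaux T P c k` is the Q-value at time T - k. -/
noncomputable def Qaux {S A : Type*} [Fintype S] [Fintype A] [Nonempty A] (T : ℕ)
    (P : Fin (T+1) → S → S → A → ℝ) (c : Fin (T+1) → S → A → ℝ) : ℕ → S → A → ℝ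
  | 0, s, a => c (Fin.last T) s a
  | k+1, s, a =>
    c ⟨T - (k+1), by omega⟩ s a +
      ∑ s', P ⟨T - k, by omega⟩ s' s a *
        Finset.univ.inf' Finset.univ_nonempty (Qaux T P c k s')

/-- Q-values: `Q(T,s,a) = c(T,s,a)`,
`Q(t-1,s,a) = c(t-1,s,a) + ∑_{s'} P(t,s',s,a) · min_{a'} Q(t,s',a')`. -/
noncomputable def Qval {S A : Type*} [Fintype S] [Fintype A] [Nonempty A] (T : ℕ)
    (P : Fin (T+1) → S → S → A → ℝ) (c : Fin (T+1) → S → A → ℝ)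
    (t : Fin (T+1)) : S → A → ℝ :=
  Qaux T P c (T - t.1)

/-- x satisfies the Bellman condition for costs c:
every state-action pair played with positive probability achieves the minimal Q-value. -/
def BellmanCond {S A : Type*} [Fintype S] [Fintype A] [Nonempty A] (T : ℕ)
    (P : Fin (T+1) → S → S → A → ℝ) (c : Fin (T+1) → S → A → ℝ)
    (x : Fin (T+1) → S → A → ℝ) : Prop :=
  ∀ t s a, 0 < x t s a →
    Qval T P c t s a = Finset.univ.inf' Finset.univ_nonempty (Qval T P c t s)

/-- Standard basis vector of the space of state-action functions. -/
def eb {S A : Type*} [DecidableEq S] [DecidableEq A] (T : ℕ)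
    (t : Fin (T+1)) (s : S) (a : A) : Fin (T+1) → S → A → ℝ :=
  fun t' s' a' => if t' = t ∧ s' = s ∧ a' = a then 1 else 0

/-- Standard basis vector of the joint (N-player) space. -/
def ebN {S A : Type*} [DecidableEq S] [DecidableEq A] (N T : ℕ)
    (i : Fin N) (t : Fin (T+1)) (s : S) (a : A) :
    Fin N → Fin (T+1) → S → A → ℝ :=
  fun j => if j = i then eb T t s a else 0

section Bellman

variable {S A : Type*} [Fintype S] [Fintype A] [Nonempty A] {T : ℕ}

/-- The optimal cost-to-go `V(t,s) = min_a Q(t,s,a)`, the multiplier of the flow-balance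
constraint at `(t,s)` (of the initial condition when `t = 0`). -/
noncomputable def optimalValue (P : Fin (T + 1) → S → S → A → ℝ) (c : Fin (T + 1) → S → A → ℝ)
    (t : Fin (T + 1)) (s : S) : ℝ :=
  univ.inf' univ_nonempty (Qval T P c t s)

/-- The advantage `Q(t,s,a) - V(t,s)`, the multiplier of the constraint `0 ≤ x(t,s,a)`. Since `Q`
is a cost, it measures the loss from playing `a` rather than an optimal action. -/
noncomputable def advantage (P : Fin (T + 1) → S → S → A → ℝ) (c : Fin (T + 1) → S → A → ℝ)
    (t : Fin (T + 1)) (s : S) (a : A) : ℝ :=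
  Qval T P c t s a - optimalValue P c t s

variable (P : Fin (T + 1) → S → S → A → ℝ) (c : Fin (T + 1) → S → A → ℝ)

theorem Qval_last (s : S) (a : A) : Qval T P c (Fin.last T) s a = c (Fin.last T) s a := by
  simp only [Qval, Fin.val_last, Nat.sub_self, Qaux]

theorem Qval_castSucc (t : Fin T) (s : S) (a : A) :
    Qval T P c t.castSucc s a =
      c t.castSucc s a + ∑ s', P t.succ s' s a * optimalValue P c t.succ s' := by
  have stages_left : T - t = T - (t + 1) + 1 := by omega
  have current_time : T - (T - (t + 1) + 1) = t := by omega
  have next_time : T - (T - (t + 1)) = t + 1 := by omega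
  simp only [optimalValue, Qval, Fin.val_castSucc, Fin.val_succ, stages_left, Qaux,
    current_time, next_time]
  rfl

theorem optimalValue_le_Qval (t : Fin (T + 1)) (s : S) (a : A) :
    optimalValue P c t s ≤ Qval T P c t s a :=
  inf'_le _ (mem_univ a)

theorem advantage_nonneg (t : Fin (T + 1)) (s : S) (a : A) : 0 ≤ advantage P c t s a :=
  sub_nonneg.mpr (optimalValue_le_Qval P c t s a)

theorem optimalValue_add_advantage (t : Fin (T + 1)) (s : S) (a : A) :
    optimalValue P c t s + advantage P c t s a = Qval T P c t s a :=
  add_sub_cancel _ _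

variable {P c}

theorem bellmanCond_iff_advantage_mul_eq_zero {x : Fin (T + 1) → S → A → ℝ}
    (hx : ∀ t s a, 0 ≤ x t s a) :
    BellmanCond T P c x ↔ ∀ t s a, advantage P c t s a * x t s a = 0 := by
  refine forall₃_congr fun t s a => ?_
  rw [mul_eq_zero, (hx t s a).lt_iff_ne', ne_eq, or_iff_not_imp_right, advantage, sub_eq_zero,
    optimalValue]

theorem stmt2_general {x : Fin (T + 1) → S → A → ℝ} (hx : ∀ t s a, 0 ≤ x t s a)
    (hbell : BellmanCond T P c x)
    {ν : Fin (T + 1) → S → ℝ} {μ : Fin (T + 1) → S → A → ℝ}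
    (hν : ∀ t s, ν t s = univ.inf' univ_nonempty (Qval T P c t s))
    (hμ : ∀ t s a, μ t s a = Qval T P c t s a - ν t s) :
    (∀ t s a, 0 ≤ μ t s a) ∧
    (∀ t s a, μ t s a * x t s a = 0) ∧
    (∀ (t : Fin T) (s : S) (a : A),
      c t.castSucc s a + ∑ s', P t.succ s' s a * ν t.succ s'
        = ν t.castSucc s + μ t.castSucc s a) ∧
    (∀ s a, c (Fin.last T) s a = ν (Fin.last T) s + μ (Fin.last T) s a) := by
  obtain rfl : ν = optimalValue P c := funext₂ hν
  obtain rfl : μ = advantage P c := funext₃ hμ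
  refine ⟨advantage_nonneg P c, (bellmanCond_iff_advantage_mul_eq_zero hx).mp hbell,
    fun t s a => ?_, fun s a => ?_⟩
  · rw [optimalValue_add_advantage, Qval_castSucc]
  · rw [optimalValue_add_advantage, Qval_last]

end Bellman

/-- If x̂ ∈ 𝒳(P,z₀) satisfies the Bellman condition for costs c, then the
multipliers ν(t,s) = min_{a'} Q(t,s,a') and μ(t,s,a) = Q(t,s,a) − ν(t,s) satisfy dual
feasibility, complementary slackness, and the stationarity equations. -/
theorem stmt2 {S A : Type*} [Fintype S] [Fintype A] [Nonempty S] [Nonempty A] {T : ℕ}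
    (P : Fin (T+1) → S → S → A → ℝ) (hP : IsKernel T P)
    (z0 : S → ℝ) (hz0 : ∀ s, 0 ≤ z0 s)
    (c : Fin (T+1) → S → A → ℝ)
    (xhat : Fin (T+1) → S → A → ℝ) (hxhat : xhat ∈ Feas T P z0)
    (hbell : BellmanCond T P c xhat)
    (ν : Fin (T+1) → S → ℝ) (μ : Fin (T+1) → S → A → ℝ)
    (hν : ∀ t s, ν t s = Finset.univ.inf' Finset.univ_nonempty (Qval T P c t s))
    (hμ : ∀ t s a, μ t s a = Qval T P c t s a - ν t s) :
    (∀ t s a, 0 ≤ μ t s a) ∧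
    (∀ t s a, μ t s a * xhat t s a = 0) ∧
    (∀ (t : ℕ) (ht : t < T), ∀ s a,
      c ⟨t, by omega⟩ s a + ∑ s', P ⟨t+1, by omega⟩ s' s a * ν ⟨t+1, by omega⟩ s'
        = ν ⟨t, by omega⟩ s + μ ⟨t, by omega⟩ s a) ∧
    (∀ s a, c (Fin.last T) s a = ν (Fin.last T) s + μ (Fin.last T) s a) := by
  obtain ⟨dual, slack, stationary, terminal⟩ := stmt2_general hxhat.1 hbell hν hμ
  exact ⟨dual, slack, fun t ht => stationary ⟨t, ht⟩, terminal⟩
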